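/- Let G = SL₂(ℂ) act on V = R₃ = Sym³(ℂ²), its 4-dimensional irreducible representation. Then G' equals the image in GL(V) of the group {g ∈ GL₂(ℂ) : det(g) = ±1} acting on Sym³(ℂ²). Equivalently, G'/G is generated by scalar multiplication by i on R₃. -/

import Mathlib

noncomputable section

/-- A function `V → ℂ` is a polynomial function if it lies in the subalgebra of
functions generated by the linear functionals, i.e. it is given by a polynomial
in linear coordinates. -/
def IsPolyFun {V : Type*} [AddCommGroup V] [Module ℂ V] (f : V → ℂ) : Prop :=
  f ∈ Algebra.adjoin ℂ (Set.range fun l : V →ₗ[ℂ] ℂ => (l : V → ℂ))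

/-- Given a subgroup `G` of `GL(V)`, the group `G'` of all linear automorphisms of `V`
preserving every `G`-invariant polynomial function on `V`. -/
def primeGroup {V : Type*} [AddCommGroup V] [Module ℂ V]
    (G : Subgroup (V ≃ₗ[ℂ] V)) : Subgroup (V ≃ₗ[ℂ] V) where
  carrier := {φ | ∀ f : V → ℂ, IsPolyFun f →
      (∀ g ∈ G, ∀ v : V, f (g v) = f v) → ∀ v : V, f (φ v) = f v}
  one_mem' := by intro f _ _ v; rfl
  mul_mem' := by
    intro a b ha hb f hf hinv v
    have h2 : f (a (b v)) = f (b v) := ha f hf hinv (b v)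
    exact h2.trans (hb f hf hinv v)
  inv_mem' := by
    intro a ha f hf hinv v
    have h := ha f hf hinv (a⁻¹ v)
    have : a (a⁻¹ v) = v := a.apply_symm_apply v
    rw [this] at h
    exact h.symm

/-- The algebraic exponential of an endomorphism of a finite-dimensional space
(intended for nilpotent endomorphisms, where the series is a finite sum). -/
def endExp {g : Type*} [AddCommGroup g] [Module ℂ g] [FiniteDimensional ℂ g]
    (A : Module.End ℂ g) : Module.End ℂ g :=
  ∑ k ∈ Finset.range (Module.finrank ℂ g + 1), (k.factorial : ℂ)⁻¹ • A ^ k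

/-- The adjoint group `G = Aut(g)⁰` of a semisimple Lie algebra `g`: the subgroup of
`GL(g)` generated by the exponentials of nilpotent inner derivations `ad x`. -/
def adjointGroup (g : Type*) [LieRing g] [LieAlgebra ℂ g] [FiniteDimensional ℂ g] :
    Subgroup (g ≃ₗ[ℂ] g) :=
  Subgroup.closure {u : g ≃ₗ[ℂ] g | ∃ x : g,
    IsNilpotent (LieAlgebra.ad ℂ g x) ∧ (u : g →ₗ[ℂ] g) = endExp (LieAlgebra.ad ℂ g x)}

/-- The subgroup of `GL(g)` fixing a subalgebra `t` pointwise. -/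
def pointwiseStab {g : Type*} [LieRing g] [LieAlgebra ℂ g]
    (t : LieSubalgebra ℂ g) : Subgroup (g ≃ₗ[ℂ] g) where
  carrier := {u | ∀ x ∈ t, u x = x}
  one_mem' := by intro x _; rfl
  mul_mem' := by
    intro a b ha hb x hx
    have : a (b x) = a x := by rw [hb x hx]
    exact this.trans (ha x hx)
  inv_mem' := by
    intro a ha x hx
    conv_lhs => rw [← ha x hx]
    exact a.symm_apply_apply x

/-- The maximal torus of the adjoint group corresponding to a Cartan subalgebra `t`:
the elements of the adjoint group acting trivially on `t`. -/
def maximalTorus (g : Type*) [LieRing g] [LieAlgebra ℂ g] [FiniteDimensional ℂ g]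
    (t : LieSubalgebra ℂ g) : Subgroup (g ≃ₗ[ℂ] g) :=
  adjointGroup g ⊓ pointwiseStab t

namespace Stmt17

/-- A representation of `SL₂(ℂ)` is polynomial (algebraic) if all its matrix
coefficients are polynomial functions of the matrix entries. -/
def IsPolynomialRep {W : Type} [AddCommGroup W] [Module ℂ W]
    (ρ : Matrix.SpecialLinearGroup (Fin 2) ℂ →* (W ≃ₗ[ℂ] W)) : Prop :=
  ∀ (l : W →ₗ[ℂ] ℂ) (w : W), ∃ p : MvPolynomial (Fin 2 × Fin 2) ℂ,
    ∀ g : Matrix.SpecialLinearGroup (Fin 2) ℂ,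
      l (ρ g w) = MvPolynomial.eval (fun ij => (g : Matrix (Fin 2) (Fin 2) ℂ) ij.1 ij.2) p

/-- Irreducibility of a representation. -/
def IsIrreducibleRep {W : Type} [AddCommGroup W] [Module ℂ W]
    (ρ : Matrix.SpecialLinearGroup (Fin 2) ℂ →* (W ≃ₗ[ℂ] W)) : Prop :=
  ∀ U : Submodule ℂ W, (∀ g : Matrix.SpecialLinearGroup (Fin 2) ℂ, ∀ w ∈ U, ρ g w ∈ U) →
    U = ⊥ ∨ U = ⊤

/-!
Let `v` be a highest weight vector. The lower unipotent orbit of `v` is a polynomial curve, and the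
homogenisation of this curve is a rational normal curve `ν`, on which `g` acts by
`ν p ↦ ν (g *ᵥ p)`; so the representation is the space of binary cubics, with a basis
`b 0, …, b 3` in which `ν` is the cone of pure cubes. The discriminant of binary cubics is an
invariant, since it equals `-27 * (det M) ^ 6` at the sum of the cubes of the columns of `M`, and
such sums are dense. The cone over the rational normal curve is the locus where the gradient of the
discriminant vanishes. Hence every `φ ∈ G'` preserves this cone, and it maps `b 0` and `b 3` to the
cubes of the columns of a matrix `M` with `(det M) ^ 6 = 1`. Up to an element of `SL₂` and
a power of `i`, the map `φ` then fixes `b 0` and `b 3`, and comparing coefficients in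
the discriminant shows that it belongs to the torus. Conversely, `i` maps `b 0 + b 3` into
its own `SL₂`-orbit, whose multiples are dense, so `i ∈ G'`.
-/

open Module
open scoped Matrix MatrixGroups

section PolynomialCurves

variable {K E : Type*} [Field K] [AddCommGroup E] [Module K E]

lemma polynomialModule_eq_zero_of_infinite_eval_eq_zero {q : PolynomialModule K E} {S : Set K}
    (hS : S.Infinite) (hq : ∀ s ∈ S, PolynomialModule.eval s q = 0) : q = 0 := by
  ext k
  rw [PolynomialModule.coeff_zero, Finsupp.zero_apply, ← forall_dual_apply_eq_zero_iff K]
  intro f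
  have hroot : q.coeff.sum (fun i u ↦ Polynomial.monomial i (f u)) = 0 := by
    refine Polynomial.eq_zero_of_infinite_isRoot _ (hS.mono fun s hs ↦ ?_)
    have := congrArg f (hq s hs)
    simpa [PolynomialModule.eval, Finsupp.sum, Polynomial.IsRoot, Polynomial.eval_finsetSum,
      mul_comm] using this
  have hcoeff := congrArg (Polynomial.coeff · k) hroot
  by_cases hk : q.coeff k = 0
  · rw [hk, map_zero]
  · simpa [Finsupp.sum, Polynomial.coeff_monomial, hk] using hcoeff

lemma polynomialModule_eq_of_infinite_eval_eq {q r : PolynomialModule K E} {S : Set K}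
    (hS : S.Infinite) (h : ∀ s ∈ S, PolynomialModule.eval s q = PolynomialModule.eval s r) :
    q = r :=
  sub_eq_zero.1 <| polynomialModule_eq_zero_of_infinite_eval_eq_zero hS fun s hs ↦ by
    rw [map_sub, h s hs, sub_self]

lemma exists_polynomialModule_eval_eq {ι κ : Type*} [Finite κ] (b : Basis κ K E) (x : ι → K)
    (F : ι → E) (hF : ∀ j, ∃ P : Polynomial K, ∀ i, b.coord j (F i) = P.eval (x i)) :
    ∃ q : PolynomialModule K E, ∀ i, F i = PolynomialModule.eval (x i) q := by
  cases nonempty_fintype κ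
  choose P hP using hF
  refine ⟨∑ j, P j • PolynomialModule.single K 0 (b j), fun i ↦ ?_⟩
  simp [← hP, b.sum_repr]

lemma coeff_comp_C_mul_X (c : K) (q : PolynomialModule K E) (k : ℕ) :
    (PolynomialModule.comp (Polynomial.C c * Polynomial.X) q).coeff k = c ^ k • q.coeff k := by
  induction q using PolynomialModule.induction_linear with
  | zero => simp
  | add f g hf hg =>
    rw [map_add, PolynomialModule.coeff_add, PolynomialModule.coeff_add, Finsupp.add_apply,
      Finsupp.add_apply, hf, hg, smul_add]
  | single i u =>
    rw [PolynomialModule.comp_single, mul_pow, ← map_pow, Polynomial.C_mul_X_pow_eq_monomial,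
      PolynomialModule.monomial_smul_single, PolynomialModule.coeff_single,
      PolynomialModule.coeff_single, add_zero]
    rcases eq_or_ne i k with rfl | hik
    · simp
    · simp [hik]

lemma apply_coeff_of_apply_eval_eq_smul_eval_mul {f : E →ₗ[K] E} {q : PolynomialModule K E}
    {S : Set K} (hS : S.Infinite) {a c : K}
    (h : ∀ s ∈ S, f (PolynomialModule.eval s q) = a • PolynomialModule.eval (c * s) q) (k : ℕ) :
    f (q.coeff k) = (a * c ^ k) • q.coeff k := by
  have hmap : PolynomialModule.map K f q =
      a • PolynomialModule.comp (Polynomial.C c * Polynomial.X) q := by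
    refine polynomialModule_eq_of_infinite_eval_eq hS fun s hs ↦ ?_
    rw [PolynomialModule.eval_map', h s hs, map_smul, PolynomialModule.comp_eval]
    simp
  have hcoeff := congrArg (PolynomialModule.coeffLinearEquiv K K · k) hmap
  simpa [PolynomialModule.map, coeff_comp_C_mul_X, mul_smul, -PolynomialModule.comp_apply]
    using hcoeff

lemma eval_eq_sum_fin {q : PolynomialModule K E} {n : ℕ} (hq : ∀ k, n < k → q.coeff k = 0)
    (s : K) : PolynomialModule.eval s q = ∑ k : Fin (n + 1), s ^ (k : ℕ) • q.coeff k := by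
  rw [Fin.sum_univ_eq_sum_range (fun k ↦ s ^ k • q.coeff k) (n + 1)]
  refine Finsupp.sum_of_support_subset _ (fun k hk ↦ ?_) _ (fun _ _ ↦ smul_zero _)
  by_contra hkn
  exact Finsupp.mem_support_iff.1 hk (hq k (by simpa using hkn))

lemma map_aeval_eq_eval {σ A : Type*} [CommRing A] [Algebra K A] {φ : A →+* K}
    (hφ : φ.comp (algebraMap K A) = RingHom.id K) (Q : σ → A) (p : MvPolynomial σ K) :
    φ (MvPolynomial.aeval Q p) = MvPolynomial.eval (fun i ↦ φ (Q i)) p := by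
  rw [MvPolynomial.map_aeval, hφ, MvPolynomial.coe_eval₂Hom]
  rfl

end PolynomialCurves

section Subgroups

/-- The lower unitriangular matrix with off-diagonal entry `s`. -/
def lower (s : ℂ) : SL(2, ℂ) := ⟨!![1, 0; s, 1], by simp [Matrix.det_fin_two]⟩

/-- The upper unitriangular matrix with off-diagonal entry `s`. -/
def upper (s : ℂ) : SL(2, ℂ) := ⟨!![1, s; 0, 1], by simp [Matrix.det_fin_two]⟩

/-- The diagonal matrix with entries `t` and `t⁻¹`. -/
def torus (t : ℂˣ) : SL(2, ℂ) :=
  ⟨!![(t : ℂ), 0; 0, ((t⁻¹ : ℂˣ) : ℂ)], by simp [Matrix.det_fin_two]⟩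

/-- The representative of the nontrivial Weyl group element sending `(x, y)` to `(-y, x)`. -/
def weyl : SL(2, ℂ) := ⟨!![0, -1; 1, 0], by simp [Matrix.det_fin_two]⟩

@[simp] lemma coe_lower (s : ℂ) : (lower s : Matrix (Fin 2) (Fin 2) ℂ) = !![1, 0; s, 1] := rfl

@[simp] lemma coe_upper (s : ℂ) : (upper s : Matrix (Fin 2) (Fin 2) ℂ) = !![1, s; 0, 1] := rfl

@[simp] lemma coe_torus (t : ℂˣ) :
    (torus t : Matrix (Fin 2) (Fin 2) ℂ) = !![(t : ℂ), 0; 0, ((t⁻¹ : ℂˣ) : ℂ)] := rfl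

@[simp] lemma coe_weyl : (weyl : Matrix (Fin 2) (Fin 2) ℂ) = !![0, -1; 1, 0] := rfl

lemma torus_mul (s t : ℂˣ) : torus (s * t) = torus s * torus t :=
  Subtype.ext <| by simp [mul_comm]

lemma torus_one : torus 1 = 1 :=
  Subtype.ext <| by simp [Matrix.one_fin_two]

lemma torus_mul_lower (t : ℂˣ) (s : ℂ) : torus t * lower (t ^ 2 * s) = lower s * torus t :=
  Subtype.ext <| by simp [field]

lemma torus_mul_weyl (t : ℂˣ) : torus t * weyl = weyl * torus t⁻¹ :=
  Subtype.ext <| by simp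

lemma lower_mul_weyl (s : ℂ) : lower (-s) * weyl = weyl * upper s :=
  Subtype.ext <| by simp

lemma eq_lower_mul_torus_mul_upper (g : SL(2, ℂ)) (t : ℂˣ) (ht : g 0 0 = t) :
    g = lower (g 1 0 / t) * torus t * upper (g 0 1 / t) := by
  have hdet := g.2
  rw [Matrix.det_fin_two, ht] at hdet
  have h11 : g 1 1 = (1 + g 0 1 * g 1 0) / t := by
    field_simp
    linear_combination hdet
  apply Subtype.ext
  rw [Matrix.eta_fin_two g.1]
  simp [ht, h11, field, add_comm]

end Subgroups

section Weights

variable {W : Type} [AddCommGroup W] [Module ℂ W] (ρ : SL(2, ℂ) →* (W ≃ₗ[ℂ] W))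

/-- The space of vectors of weight `n` for the diagonal torus. -/
def weightSpace (n : ℤ) : Submodule ℂ W :=
  ⨅ t : ℂˣ, End.eigenspace (ρ (torus t) : W →ₗ[ℂ] W) ((t ^ n : ℂˣ) : ℂ)

variable {ρ} {v : W} {n : ℤ}

lemma mem_weightSpace :
    v ∈ weightSpace ρ n ↔ ∀ t : ℂˣ, ρ (torus t) v = ((t ^ n : ℂˣ) : ℂ) • v := by
  simp [weightSpace]

lemma weyl_mem_weightSpace (hv : v ∈ weightSpace ρ n) : ρ weyl v ∈ weightSpace ρ (-n) := by
  rw [mem_weightSpace] at hv ⊢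
  intro t
  rw [← LinearEquiv.mul_apply, ← map_mul, torus_mul_weyl, map_mul, LinearEquiv.mul_apply, hv,
    map_smul, inv_zpow']

lemma coeff_mem_weightSpace_of_lower {q : PolynomialModule ℂ W} (hv : v ∈ weightSpace ρ n)
    (hq : ∀ s, ρ (lower s) v = PolynomialModule.eval s q) (k : ℕ) :
    q.coeff k ∈ weightSpace ρ (n - 2 * k) := by
  rw [mem_weightSpace] at hv ⊢
  intro t
  have hscale : ∀ s ∈ Set.univ, (ρ (torus t) : W →ₗ[ℂ] W) (PolynomialModule.eval s q) =
      ((t ^ n : ℂˣ) : ℂ) • PolynomialModule.eval (((t ^ 2)⁻¹ : ℂˣ) * s) q := by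
    intro s _
    have hs : torus t * lower s = lower (((t ^ 2)⁻¹ : ℂˣ) * s) * torus t := by
      rw [← torus_mul_lower]
      simp [field]
    rw [← hq, ← hq, LinearEquiv.coe_coe, ← LinearEquiv.mul_apply, ← map_mul, hs, map_mul,
      LinearEquiv.mul_apply, hv, map_smul]
  have hk := apply_coeff_of_apply_eval_eq_smul_eval_mul Set.infinite_univ hscale k
  rw [LinearEquiv.coe_coe] at hk
  have hexp : t ^ (n - 2 * k) = t ^ n * ((t ^ 2)⁻¹) ^ k := by
    rw [zpow_sub, zpow_mul, zpow_natCast, zpow_ofNat, inv_pow]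
  rw [hk, hexp, Units.val_mul, Units.val_pow_eq_pow_val]

lemma two_zpow_injective : Function.Injective fun m : ℤ ↦ (2 : ℂ) ^ m :=
  fun m m' (h : (2 : ℂ) ^ m = 2 ^ m') ↦
    zpow_right_injective₀ (two_pos : (0 : ℝ) < 2) (by simp) <| by
      simpa only [norm_zpow, RCLike.norm_ofNat] using congrArg norm h

lemma mem_eigenspace_of_mem_weightSpace (hv : v ∈ weightSpace ρ n) :
    v ∈ End.eigenspace (ρ (torus (Units.mk0 2 two_ne_zero)) : W →ₗ[ℂ] W) ((2 : ℂ) ^ n) := by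
  simpa [End.mem_eigenspace_iff] using mem_weightSpace.1 hv (Units.mk0 2 two_ne_zero)

lemma linearIndependent_of_mem_weightSpace {ι : Type*} {w : ι → W} {m : ι → ℤ}
    (hm : Function.Injective m) (hw : ∀ i, w i ∈ weightSpace ρ (m i)) (hw0 : ∀ i, w i ≠ 0) :
    LinearIndependent ℂ w :=
  End.eigenvectors_linearIndependent' _ _ (two_zpow_injective.comp hm) w fun i ↦
    ⟨mem_eigenspace_of_mem_weightSpace (hw i), hw0 i⟩

lemma finite_setOf_weightSpace_ne_bot [FiniteDimensional ℂ W] :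
    {m : ℤ | weightSpace ρ m ≠ ⊥}.Finite := by
  refine Set.Finite.of_finite_image (f := fun m : ℤ ↦ (2 : ℂ) ^ m)
    ((End.finite_hasEigenvalue (ρ (torus (Units.mk0 2 two_ne_zero)) : W →ₗ[ℂ] W)).subset ?_)
    two_zpow_injective.injOn
  rintro _ ⟨m, hm, rfl⟩
  obtain ⟨v, hv, hv0⟩ := Submodule.exists_mem_ne_zero_of_ne_bot hm
  exact End.hasEigenvalue_of_hasEigenvector ⟨mem_eigenspace_of_mem_weightSpace hv, hv0⟩

section FiniteDimensional

variable [FiniteDimensional ℂ W] (hρ : IsPolynomialRep ρ)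
include hρ

lemma exists_eval_eq_lower (v : W) :
    ∃ q : PolynomialModule ℂ W, ∀ s, ρ (lower s) v = PolynomialModule.eval s q := by
  let b := finBasis ℂ W
  refine exists_polynomialModule_eval_eq b _ _ fun j ↦ ?_
  obtain ⟨p, hp⟩ := hρ (b.coord j) v
  refine ⟨MvPolynomial.aeval (fun ij ↦ !![1, 0; Polynomial.X, 1] ij.1 ij.2) p, fun s ↦ ?_⟩
  have hentry : (fun ij : Fin 2 × Fin 2 ↦ lower s ij.1 ij.2) = fun ij ↦ Polynomial.evalRingHom s
      (!![1, 0; Polynomial.X, 1] ij.1 ij.2) := by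
    ext ⟨i, j⟩
    fin_cases i <;> fin_cases j <;> simp
  rw [hp, hentry, ← map_aeval_eq_eval (by ext; simp), Polynomial.coe_evalRingHom]

lemma exists_pow_smul_torus_eq_eval (v : W) :
    ∃ (M : ℕ) (q : PolynomialModule ℂ W), ∀ t : ℂˣ,
      (t : ℂ) ^ M • ρ (torus t) v = PolynomialModule.eval (t : ℂ) q := by
  let b := finBasis ℂ W
  have hcoord (j) : ∃ (m : ℕ) (P : Polynomial ℂ), ∀ t : ℂˣ,
      P.eval (t : ℂ) = b.coord j (ρ (torus t) v) * (t : ℂ) ^ m := by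
    obtain ⟨p, hp⟩ := hρ (b.coord j) v
    let L : LaurentPolynomial ℂ := MvPolynomial.aeval (fun ij ↦
      !![LaurentPolynomial.T 1, 0; 0, LaurentPolynomial.T (-1)] ij.1 ij.2) p
    obtain ⟨m, P, hP⟩ := L.exists_T_pow
    refine ⟨m, P, fun t ↦ ?_⟩
    have hentry : (fun ij : Fin 2 × Fin 2 ↦ torus t ij.1 ij.2) =
        fun ij ↦ LaurentPolynomial.eval₂ (RingHom.id ℂ) t
          (!![LaurentPolynomial.T 1, 0; 0, LaurentPolynomial.T (-1)] ij.1 ij.2) := by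
      ext ⟨i, j⟩
      fin_cases i <;> fin_cases j <;> simp
    have hPt := congrArg (LaurentPolynomial.eval₂ (RingHom.id ℂ) t) hP
    rw [LaurentPolynomial.eval₂_toLaurent, Polynomial.eval₂_id, map_mul,
      LaurentPolynomial.eval₂_T_n] at hPt
    rw [hp, hentry, ← map_aeval_eq_eval (by ext; simp), hPt]
  choose m P hP using hcoord
  let M := ∑ j, m j
  obtain ⟨q, hq⟩ := exists_polynomialModule_eval_eq b (fun t : ℂˣ ↦ (t : ℂ))
    (fun t ↦ (t : ℂ) ^ M • ρ (torus t) v) fun j ↦ ⟨P j * Polynomial.X ^ (M - m j), fun t ↦ by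
      have hM : m j + (M - m j) = M :=
        Nat.add_sub_cancel' (Finset.single_le_sum (fun _ _ ↦ Nat.zero_le _) (Finset.mem_univ j))
      rw [map_smul, smul_eq_mul, Polynomial.eval_mul, hP, Polynomial.eval_pow, Polynomial.eval_X,
        mul_assoc, ← pow_add, hM, mul_comm]⟩
  exact ⟨M, q, hq⟩

lemma exists_ne_zero_mem_weightSpace [Nontrivial W] :
    ∃ (n : ℤ) (v : W), v ≠ 0 ∧ v ∈ weightSpace ρ n := by
  obtain ⟨v, hv⟩ := exists_ne (0 : W)
  obtain ⟨M, q, hq⟩ := exists_pow_smul_torus_eq_eval hρ v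
  have hcoeff (k : ℕ) : q.coeff k ∈ weightSpace ρ (k - M) := by
    rw [mem_weightSpace]
    intro s
    have hscale : ∀ t ∈ ({0}ᶜ : Set ℂ), (ρ (torus s) : W →ₗ[ℂ] W) (PolynomialModule.eval t q) =
        ((s ^ (-M : ℤ) : ℂˣ) : ℂ) • PolynomialModule.eval (s * t) q := by
      intro t ht
      lift t to ℂˣ using IsUnit.mk0 t ht
      rw [← hq, ← Units.val_mul, ← hq, torus_mul, map_mul, LinearEquiv.mul_apply, map_smul,
        smul_smul, Units.val_mul, mul_pow, ← mul_assoc]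
      simp
    have hk := apply_coeff_of_apply_eval_eq_smul_eval_mul (Set.finite_singleton 0).infinite_compl
      hscale k
    rw [LinearEquiv.coe_coe] at hk
    rw [hk, ← Units.val_pow_eq_pow_val, ← Units.val_mul, ← zpow_natCast, ← zpow_add,
      neg_add_eq_sub]
  by_contra! hzero
  have hq0 : q = 0 := by
    ext k
    by_contra hk
    exact hzero _ _ hk (hcoeff k)
  exact hv (by simpa [torus_one, hq0] using hq 1)

lemma exists_highest_weight [Nontrivial W] :
    ∃ n : ℕ, weightSpace ρ n ≠ ⊥ ∧ ∀ m : ℤ, n < m → weightSpace ρ m = ⊥ := by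
  obtain ⟨m₀, v₀, hv₀, hm₀⟩ := exists_ne_zero_mem_weightSpace hρ
  obtain ⟨n, hn, hmax⟩ := Set.exists_max_image {m : ℤ | weightSpace ρ m ≠ ⊥} id
    finite_setOf_weightSpace_ne_bot ⟨m₀, (Submodule.ne_bot_iff _).2 ⟨v₀, hm₀, hv₀⟩⟩
  obtain ⟨v, hv, hv0⟩ := Submodule.exists_mem_ne_zero_of_ne_bot hn
  have hneg : -n ≤ n := hmax (-n) <| (Submodule.ne_bot_iff _).2
    ⟨_, weyl_mem_weightSpace hv, (ρ weyl).map_ne_zero_iff.2 hv0⟩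
  lift n to ℕ using by lia
  refine ⟨n, hn, fun m hm ↦ ?_⟩
  by_contra hne
  exact (hmax m hne).not_gt hm

end FiniteDimensional

end Weights

section BinaryForms

/-- The point `∑ₖ x^(n-k) y^k wₖ` of the cone over the rational normal curve of degree `n`
spanned by `w`, for `p = (x, y)`. -/
def rationalNormalCurve {E : Type*} [AddCommGroup E] [Module ℂ E] {n : ℕ} (w : Fin (n + 1) → E)
    (p : Fin 2 → ℂ) : E :=
  ∑ k : Fin (n + 1), (p 0 ^ (n - k : ℕ) * p 1 ^ (k : ℕ)) • w k

section RationalNormalCurve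

variable {E : Type*} [AddCommGroup E] [Module ℂ E] {n : ℕ} (w : Fin (n + 1) → E)

lemma rationalNormalCurve_of_snd_eq_zero {p : Fin 2 → ℂ} (hp : p 1 = 0) :
    rationalNormalCurve w p = p 0 ^ n • w 0 := by
  rw [rationalNormalCurve, Fin.sum_univ_succ]
  simp [hp]

lemma rationalNormalCurve_of_fst_eq_zero {p : Fin 2 → ℂ} (hp : p 0 = 0) :
    rationalNormalCurve w p = p 1 ^ n • w (Fin.last n) := by
  rw [rationalNormalCurve, Fin.sum_univ_castSucc]
  simp [hp, zero_pow, Nat.sub_ne_zero_of_lt]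

lemma rationalNormalCurve_smul (c : ℂ) (p : Fin 2 → ℂ) :
    rationalNormalCurve w (c • p) = c ^ n • rationalNormalCurve w p := by
  rw [rationalNormalCurve, rationalNormalCurve, Finset.smul_sum]
  refine Finset.sum_congr rfl fun k _ ↦ ?_
  have hk : c ^ n = c ^ (n - k : ℕ) * c ^ (k : ℕ) := by
    rw [← pow_add, Nat.sub_add_cancel (Fin.is_le k)]
  rw [smul_smul, hk, Pi.smul_apply, Pi.smul_apply, smul_eq_mul, smul_eq_mul, mul_pow, mul_pow,
    mul_mul_mul_comm]

lemma rationalNormalCurve_one_fst (y : ℂ) :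
    rationalNormalCurve w ![1, y] = ∑ k : Fin (n + 1), y ^ (k : ℕ) • w k := by
  simp [rationalNormalCurve]

lemma apply_eq_of_forall_apply_rationalNormalCurve_eq {E' : Type*} [AddCommGroup E'] [Module ℂ E']
    {f g : E →ₗ[ℂ] E'}
    (h : ∀ p, f (rationalNormalCurve w p) = g (rationalNormalCurve w p)) (k : Fin (n + 1)) :
    f (w k) = g (w k) := by
  let q (f : E →ₗ[ℂ] E') : PolynomialModule ℂ E' :=
    ∑ k : Fin (n + 1), PolynomialModule.single ℂ k (f (w k))
  have heval (f : E →ₗ[ℂ] E') (s : ℂ) :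
      PolynomialModule.eval s (q f) = f (rationalNormalCurve w ![1, s]) := by
    simp [q, rationalNormalCurve_one_fst]
  have hq : q f = q g := polynomialModule_eq_of_infinite_eval_eq Set.infinite_univ fun s _ ↦ by
    rw [heval, heval, h]
  have hcoeff := congrArg (PolynomialModule.coeffLinearEquiv ℂ ℂ · k) hq
  simpa [q, Finsupp.single_apply, Fin.val_inj] using hcoeff

end RationalNormalCurve

variable {W : Type} [AddCommGroup W] [Module ℂ W] {ρ : SL(2, ℂ) →* (W ≃ₗ[ℂ] W)} {n : ℕ} {v : W}

variable (ρ) in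
/-- The vectors `w` transform under `ρ` like the coefficients of `n`-th powers of linear forms:
if `w` is a basis, it identifies `ρ` with the representation on `Symⁿ(ℂ²)`. -/
def IsSymPower (w : Fin (n + 1) → W) : Prop :=
  ∀ (g : SL(2, ℂ)) (p : Fin 2 → ℂ),
    ρ g (rationalNormalCurve w p) = rationalNormalCurve w (g.1 *ᵥ p)

lemma upper_apply_of_highest_weight [FiniteDimensional ℂ W] (hρ : IsPolynomialRep ρ)
    (hv : v ∈ weightSpace ρ n) (hmax : ∀ m : ℤ, n < m → weightSpace ρ m = ⊥) (s : ℂ) :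
    ρ (upper s) v = v := by
  have hmin (m : ℤ) (hm : m < -n) : weightSpace ρ m = ⊥ := by
    rw [eq_bot_iff]
    intro u hu
    have := weyl_mem_weightSpace hu
    rw [hmax (-m) (by lia)] at this
    simpa using this
  have hu := weyl_mem_weightSpace hv
  obtain ⟨q, hq⟩ := exists_eval_eq_lower hρ (ρ weyl v)
  have hq0 (k : ℕ) (hk : 0 < k) : q.coeff k = 0 := by
    have := coeff_mem_weightSpace_of_lower hu hq k
    rw [hmin _ (by lia)] at this
    simpa using this
  have hlower (s : ℂ) : ρ (lower s) (ρ weyl v) = q.coeff 0 := by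
    rw [hq, eval_eq_sum_fin hq0]
    simp
  have hlower0 : lower 0 = 1 := Subtype.ext <| by simp [Matrix.one_fin_two]
  apply (ρ weyl).injective
  rw [← LinearEquiv.mul_apply, ← map_mul, ← lower_mul_weyl, map_mul, LinearEquiv.mul_apply,
    hlower, ← hlower 0, hlower0, map_one, LinearEquiv.coe_one, id]

lemma exists_lower_apply_eq_sum [FiniteDimensional ℂ W] (hρ : IsPolynomialRep ρ)
    (hv : v ∈ weightSpace ρ n) (hmax : ∀ m : ℤ, n < m → weightSpace ρ m = ⊥) :
    ∃ w : Fin (n + 1) → W, (∀ k : Fin (n + 1), w k ∈ weightSpace ρ (n - 2 * (k : ℕ))) ∧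
      ∀ s, ρ (lower s) v = ∑ k : Fin (n + 1), s ^ (k : ℕ) • w k := by
  obtain ⟨q, hq⟩ := exists_eval_eq_lower hρ v
  have hweight := coeff_mem_weightSpace_of_lower hv hq
  have hq0 (k : ℕ) (hk : n < k) : q.coeff k = 0 := by
    have := weyl_mem_weightSpace (hweight k)
    rw [hmax _ (by lia)] at this
    simpa using this
  exact ⟨fun k ↦ q.coeff k, fun k ↦ hweight k, fun s ↦ by rw [hq, eval_eq_sum_fin hq0]⟩

section Orbit

variable {w : Fin (n + 1) → W} (hv : v ∈ weightSpace ρ n) (hupper : ∀ s, ρ (upper s) v = v)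
  (hlower : ∀ s, ρ (lower s) v = ∑ k : Fin (n + 1), s ^ (k : ℕ) • w k)

include hlower in
lemma first_coeff_eq_of_lower_apply : w 0 = v := by
  have hlower0 : lower 0 = 1 := Subtype.ext <| by simp [Matrix.one_fin_two]
  have h := hlower 0
  rw [← rationalNormalCurve_one_fst, rationalNormalCurve_of_snd_eq_zero _ (by simp), hlower0] at h
  simpa using h.symm

include hv hupper hlower

lemma apply_highest_weight_of_ne_zero {g : SL(2, ℂ)} (hg : g 0 0 ≠ 0) :
    ρ g v = rationalNormalCurve w (g.1.col 0) := by
  obtain ⟨t, ht⟩ := IsUnit.mk0 _ hg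
  have hcol : g.1.col 0 = (t : ℂ) • ![1, g 1 0 / t] := by
    ext i
    fin_cases i
    · simp [ht]
    · simp [mul_div_cancel₀]
  rw [hcol, rationalNormalCurve_smul, rationalNormalCurve_one_fst, ← hlower,
    eq_lower_mul_torus_mul_upper g t ht.symm, map_mul, map_mul, LinearEquiv.mul_apply,
    LinearEquiv.mul_apply, hupper, mem_weightSpace.1 hv, map_smul]
  simp

lemma weyl_apply_highest_weight : ρ weyl v = w (Fin.last n) := by
  -- For `s ≠ 0` the matrix `weyl * lower s` lies in the big cell, which gives an identity of
  -- polynomial curves to be evaluated at `s = 0`.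
  let q : PolynomialModule ℂ W := ∑ k : Fin (n + 1), PolynomialModule.single ℂ k (ρ weyl (w k))
  let r : PolynomialModule ℂ W := ∑ k : Fin (n + 1),
    PolynomialModule.single ℂ (n - k : ℕ) ((-1 : ℂ) ^ (n - k : ℕ) • w k)
  have hq (s : ℂ) : PolynomialModule.eval s q = ρ weyl (ρ (lower s) v) := by simp [q, hlower]
  have hr (s : ℂ) : PolynomialModule.eval s r = rationalNormalCurve w ![-s, 1] := by
    simp [r, rationalNormalCurve, smul_smul, ← mul_pow]
  have hqr : q = r := by
    refine polynomialModule_eq_of_infinite_eval_eq (Set.finite_singleton 0).infinite_compl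
      fun s hs ↦ ?_
    rw [hq, hr, ← LinearEquiv.mul_apply, ← map_mul,
      apply_highest_weight_of_ne_zero hv hupper hlower (by simpa using hs)]
    congr 1
    ext i
    fin_cases i <;> simp
  have h := (hq 0).symm.trans (hqr ▸ hr 0)
  rw [rationalNormalCurve_of_fst_eq_zero _ (by simp), hlower, ← rationalNormalCurve_one_fst,
    rationalNormalCurve_of_snd_eq_zero _ (by simp), first_coeff_eq_of_lower_apply hlower] at h
  simpa using h

lemma apply_highest_weight (g : SL(2, ℂ)) : ρ g v = rationalNormalCurve w (g.1.col 0) := by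
  by_cases hg : g 0 0 = 0
  · obtain ⟨h, rfl⟩ : ∃ h, g = weyl * h := ⟨weyl⁻¹ * g, by simp⟩
    have h10 : h 1 0 = 0 := by simpa [Matrix.mul_apply] using hg
    have h00 : h 0 0 ≠ 0 := fun h00 ↦ by
      have := h.det_coe
      rw [Matrix.det_fin_two] at this
      simp [h00, h10] at this
    rw [map_mul, LinearEquiv.mul_apply, apply_highest_weight_of_ne_zero hv hupper hlower h00,
      rationalNormalCurve_of_snd_eq_zero _ h10, map_smul,
      rationalNormalCurve_of_fst_eq_zero (p := (weyl * h).1.col 0) _ hg,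
      first_coeff_eq_of_lower_apply hlower, weyl_apply_highest_weight hv hupper hlower]
    simp [Matrix.vecMul_eq_sum]
  · exact apply_highest_weight_of_ne_zero hv hupper hlower hg

lemma isSymPower_of_highest_weight : IsSymPower ρ w := by
  intro g p
  by_cases hp : p = 0
  · rw [hp, Matrix.mulVec_zero, rationalNormalCurve_of_snd_eq_zero _ rfl, Pi.zero_apply]
    rcases eq_or_ne n 0 with rfl | hn
    · rw [first_coeff_eq_of_lower_apply hlower]
      simp [apply_highest_weight hv hupper hlower, rationalNormalCurve,
        first_coeff_eq_of_lower_apply hlower]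
    · simp [hn]
  · obtain ⟨h, rfl⟩ : ∃ h : SL(2, ℂ), h.1.col 0 = p := by
      obtain ⟨h, hh0, hh1⟩ := IsCoprime.exists_SL2_col (a := p 0) (b := p 1) (by
        simpa [funext_iff, imp_iff_not_or] using hp) 0
      exact ⟨h, by ext i; fin_cases i <;> simpa⟩
    rw [← apply_highest_weight hv hupper hlower, ← LinearEquiv.mul_apply, ← map_mul,
      apply_highest_weight hv hupper hlower]
    congr 1

end Orbit

lemma IsSymPower.apply_ne_zero {w : Fin (n + 1) → W} (h : IsSymPower ρ w)
    (hlast : w (Fin.last n) ≠ 0) (k : Fin (n + 1)) : w k ≠ 0 := by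
  -- If `w k = 0`, then the `k`-th coefficients of all translates `P (y + t)` vanish, so the `k`-th
  -- Hasse derivative of `P` vanishes, although `P` has degree `n ≥ k`.
  intro hk
  obtain ⟨l, hl⟩ : ∃ l : Dual ℂ W, l (w (Fin.last n)) ≠ 0 := by
    by_contra! hl
    exact hlast ((forall_dual_apply_eq_zero_iff ℂ _).1 hl)
  let P : Polynomial ℂ := ∑ j : Fin (n + 1), Polynomial.monomial j (l (w j))
  have hP (y : ℂ) : P.eval y = l (rationalNormalCurve w ![1, y]) := by
    simp [P, rationalNormalCurve_one_fst, Polynomial.eval_finsetSum, mul_comm]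
  have htaylor (t : ℂ) : Polynomial.taylor t P =
      ∑ j : Fin (n + 1), Polynomial.monomial j (l (ρ (lower t) (w j))) := by
    refine Polynomial.funext fun y ↦ ?_
    have hcol : ![1, y + t] = (lower t).1 *ᵥ ![1, y] := by
      ext i
      fin_cases i <;> simp [Matrix.mulVec, dotProduct, add_comm]
    rw [Polynomial.taylor_eval, hP, hcol, ← h]
    simp [rationalNormalCurve_one_fst, Polynomial.eval_finsetSum, mul_comm]
  have hderiv : Polynomial.hasseDeriv k P = 0 := by
    refine Polynomial.funext fun t ↦ ?_
    rw [← Polynomial.taylor_coeff, htaylor]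
    simp [Polynomial.coeff_monomial, Fin.val_inj, hk]
  have hcoeff := congrArg (Polynomial.coeff · (n - k : ℕ)) hderiv
  have hn : P.coeff n = l (w (Fin.last n)) := by
    simp [P, Fin.sum_univ_castSucc, Polynomial.coeff_monomial, (Fin.is_lt _).ne]
  rw [Polynomial.hasseDeriv_coeff, Nat.sub_add_cancel k.is_le, hn, Polynomial.coeff_zero] at hcoeff
  exact mul_ne_zero (mod_cast (Nat.choose_pos k.is_le).ne') hl hcoeff

lemma IsSymPower.apply_first {w : Fin (n + 1) → W} (h : IsSymPower ρ w) (g : SL(2, ℂ)) :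
    ρ g (w 0) = rationalNormalCurve w (g.1.col 0) := by
  have hg := h g (Pi.single 0 1)
  rw [Matrix.mulVec_single_one, rationalNormalCurve_of_snd_eq_zero _ (by simp)] at hg
  simpa using hg

lemma IsSymPower.apply_last {w : Fin (n + 1) → W} (h : IsSymPower ρ w) (g : SL(2, ℂ)) :
    ρ g (w (Fin.last n)) = rationalNormalCurve w (g.1.col 1) := by
  have hg := h g (Pi.single 1 1)
  rw [Matrix.mulVec_single_one, rationalNormalCurve_of_fst_eq_zero _ (by simp)] at hg
  simpa using hg

lemma IsSymPower.span_range_eq_top {w : Fin (n + 1) → W} (h : IsSymPower ρ w)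
    (hlast : w (Fin.last n) ≠ 0) (hirr : IsIrreducibleRep ρ) :
    Submodule.span ℂ (Set.range w) = ⊤ := by
  let U := Submodule.span ℂ (Set.range (rationalNormalCurve w))
  have hU : U = ⊤ := by
    refine (hirr U fun g ↦ ?_).resolve_left ?_
    · change U ≤ U.comap (ρ g : W →ₗ[ℂ] W)
      refine Submodule.span_le.2 ?_
      rintro _ ⟨p, rfl⟩
      exact Submodule.subset_span ⟨g.1 *ᵥ p, (h g p).symm⟩
    · refine (Submodule.ne_bot_iff _).2 ⟨_, Submodule.subset_span ⟨![0, 1], rfl⟩, ?_⟩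
      simpa [rationalNormalCurve_of_fst_eq_zero w (p := ![0, 1]) rfl]
  refine top_le_iff.1 (hU ▸ Submodule.span_le.2 ?_)
  rintro _ ⟨p, rfl⟩
  exact Submodule.sum_smul_mem _ _ fun k _ ↦ Submodule.subset_span ⟨k, rfl⟩

theorem exists_basis_isSymPower [FiniteDimensional ℂ W] [Nontrivial W] (hρ : IsPolynomialRep ρ)
    (hirr : IsIrreducibleRep ρ) : ∃ (n : ℕ) (b : Basis (Fin (n + 1)) ℂ W), IsSymPower ρ b := by
  obtain ⟨n, hn, hmax⟩ := exists_highest_weight hρ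
  obtain ⟨v, hv, hv0⟩ := Submodule.exists_mem_ne_zero_of_ne_bot hn
  have hupper := upper_apply_of_highest_weight hρ hv hmax
  obtain ⟨w, hw, hlower⟩ := exists_lower_apply_eq_sum hρ hv hmax
  have h := isSymPower_of_highest_weight hv hupper hlower
  have hlast : w (Fin.last n) ≠ 0 := by
    rwa [← weyl_apply_highest_weight hv hupper hlower, (ρ weyl).map_ne_zero_iff]
  have hli : LinearIndependent ℂ w := by
    refine linearIndependent_of_mem_weightSpace (m := fun k ↦ n - 2 * (k : ℕ)) (fun i j hij ↦ ?_)
      hw (h.apply_ne_zero hlast)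
    grind
  refine ⟨n, Basis.mk hli (h.span_range_eq_top hlast hirr).ge, ?_⟩
  rwa [Basis.coe_mk]

end BinaryForms

section PolynomialFunctions

variable {κ E E' : Type*} [AddCommGroup E] [Module ℂ E] [AddCommGroup E'] [Module ℂ E']

lemma isPolyFun_comp_linearMap {f : E' → ℂ} (hf : IsPolyFun f) (φ : E →ₗ[ℂ] E') :
    IsPolyFun (f ∘ φ) := by
  induction hf using Algebra.adjoin_induction with
  | mem f hf =>
    obtain ⟨l, rfl⟩ := hf
    exact Algebra.subset_adjoin ⟨l ∘ₗ φ, rfl⟩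
  | algebraMap c => exact Subalgebra.algebraMap_mem _ c
  | add f f' _ _ hf hf' => exact add_mem hf hf'
  | mul f f' _ _ hf hf' => exact mul_mem hf hf'

lemma isPolyFun_iff_exists_mvPolynomial [Finite κ] (b : Basis κ ℂ E) {f : E → ℂ} :
    IsPolyFun f ↔ ∃ P : MvPolynomial κ ℂ, ∀ v, f v = MvPolynomial.eval (b.repr v) P := by
  cases nonempty_fintype κ
  let x (k : κ) (v : E) : ℂ := b.coord k v
  have hx (P : MvPolynomial κ ℂ) (v : E) :
      MvPolynomial.aeval x P v = MvPolynomial.eval (b.repr v) P :=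
    map_aeval_eq_eval (φ := Pi.evalRingHom (fun _ ↦ ℂ) v) (by ext; simp) x P
  have hadjoin : Algebra.adjoin ℂ (Set.range fun l : E →ₗ[ℂ] ℂ ↦ (l : E → ℂ)) =
      (MvPolynomial.aeval x).range := by
    rw [MvPolynomial.aeval_range]
    refine le_antisymm (Algebra.adjoin_le ?_) (Algebra.adjoin_mono ?_)
    · rintro _ ⟨l, rfl⟩
      have hl : (l : E → ℂ) = ∑ k, l (b k) • x k := by
        ext v
        conv_lhs => rw [← b.sum_repr v, map_sum]
        simp [x, mul_comm]
      change (l : E → ℂ) ∈ Algebra.adjoin ℂ (Set.range x)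
      rw [hl]
      exact sum_mem fun k _ ↦ Subalgebra.smul_mem _ (Algebra.subset_adjoin (Set.mem_range_self k)) _
    · rintro _ ⟨k, rfl⟩
      exact ⟨b.coord k, rfl⟩
  simp only [IsPolyFun, hadjoin, AlgHom.mem_range, ← hx, funext_iff, eq_comm]

lemma eq_of_eqOn_ne_zero [FiniteDimensional ℂ E] {f f' h : E → ℂ} (hf : IsPolyFun f)
    (hf' : IsPolyFun f') (hh : IsPolyFun h) (hh0 : h ≠ 0) (heq : ∀ v, h v ≠ 0 → f v = f' v) :
    f = f' := by
  let b := finBasis ℂ E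
  obtain ⟨P, hP⟩ := (isPolyFun_iff_exists_mvPolynomial b).1 (sub_mem hf hf')
  obtain ⟨Q, hQ⟩ := (isPolyFun_iff_exists_mvPolynomial b).1 hh
  have hPQ : P * Q = 0 := MvPolynomial.funext fun x ↦ by
    obtain ⟨v, rfl⟩ := b.equivFun.surjective x
    rw [map_mul, map_zero, mul_eq_zero, Basis.equivFun_apply, ← hP, ← hQ, or_iff_not_imp_right]
    exact fun hv ↦ sub_eq_zero.2 (heq v hv)
  have hQ0 : Q ≠ 0 := by
    rintro rfl
    exact hh0 (funext fun v ↦ by simp [hQ])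
  rw [← sub_eq_zero]
  ext v
  rw [hP, (mul_eq_zero.1 hPQ).resolve_right hQ0, map_zero, Pi.zero_apply]

end PolynomialFunctions

section Discriminant

variable {E : Type*} [AddCommGroup E] [Module ℂ E]

variable (b : Basis (Fin 4) ℂ E)

lemma coe_repr_rationalNormalCurve (p : Fin 2 → ℂ) :
    (b.repr (rationalNormalCurve b p) : Fin 4 → ℂ) =
      ![p 0 ^ 3, p 0 ^ 2 * p 1, p 0 * p 1 ^ 2, p 1 ^ 3] := by
  ext k
  fin_cases k <;> simp [rationalNormalCurve, Fin.sum_univ_four]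

/-- The discriminant of `aX³ + 3bX²Y + 3cXY² + dY³`, where `a, b, c, d` are the coordinates of the
vector. The binomial coefficients make the points of the rational normal curve correspond to the
cubes of linear forms. -/
def cubicDiscr (v : E) : ℂ :=
  Cubic.discr ⟨b.repr v 0, 3 * b.repr v 1, 3 * b.repr v 2, b.repr v 3⟩

lemma cubicDiscr_smul (c : ℂ) (v : E) : cubicDiscr b (c • v) = c ^ 4 * cubicDiscr b v := by
  simp only [cubicDiscr, Cubic.discr, map_smul, Finsupp.smul_apply, smul_eq_mul]
  ring

lemma cubicDiscr_add_rationalNormalCurve (M : Matrix (Fin 2) (Fin 2) ℂ) :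
    cubicDiscr b (rationalNormalCurve b (M.col 0) + rationalNormalCurve b (M.col 1)) =
      -27 * M.det ^ 6 := by
  simp only [cubicDiscr, Cubic.discr, map_add, Finsupp.add_apply, coe_repr_rationalNormalCurve,
    Matrix.det_fin_two, Matrix.col_apply, Matrix.cons_val]
  ring

lemma isPolyFun_cubicDiscr : IsPolyFun (cubicDiscr b) :=
  (isPolyFun_iff_exists_mvPolynomial b).2
    ⟨Cubic.discr ⟨.X 0, 3 * .X 1, 3 * .X 2, .X 3⟩, fun v ↦ by simp [cubicDiscr, Cubic.discr]⟩

lemma lineDeriv_cubicDiscr (v w : E) : lineDeriv ℂ (cubicDiscr b) v w = -54 *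
    ((b.repr v 0 * b.repr v 3 ^ 2 - 3 * b.repr v 1 * b.repr v 2 * b.repr v 3
        + 2 * b.repr v 2 ^ 3) * b.repr w 0
      + 3 * (2 * b.repr v 1 ^ 2 * b.repr v 3 - b.repr v 0 * b.repr v 2 * b.repr v 3
        - b.repr v 1 * b.repr v 2 ^ 2) * b.repr w 1
      + 3 * (2 * b.repr v 0 * b.repr v 2 ^ 2 - b.repr v 0 * b.repr v 1 * b.repr v 3
        - b.repr v 1 ^ 2 * b.repr v 2) * b.repr w 2
      + (b.repr v 0 ^ 2 * b.repr v 3 - 3 * b.repr v 0 * b.repr v 1 * b.repr v 2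
        + 2 * b.repr v 1 ^ 3) * b.repr w 3) := by
  have hline (k : Fin 4) :
      HasDerivAt (fun t : ℂ ↦ b.repr (v + t • w) k) (b.repr w k) 0 := by
    simpa using ((hasDerivAt_id (0 : ℂ)).mul_const (b.repr w k)).const_add (b.repr v k)
  have h0 := hline 0
  have h1 := (hline 1).const_mul 3
  have h2 := (hline 2).const_mul 3
  have h3 := hline 3
  have hD := (((((h1.pow 2).mul (h2.pow 2)).sub ((h0.const_mul 4).mul (h2.pow 3))).sub
    (((h1.pow 3).const_mul 4).mul h3)).sub (((h0.pow 2).const_mul 27).mul (h3.pow 2))).add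
    ((((h0.const_mul 18).mul h1).mul h2).mul h3)
  refine (hD.congr_deriv ?_).deriv
  simp only [zero_smul, add_zero, Pi.mul_apply, Pi.pow_apply, Nat.cast_ofNat, Nat.add_one_sub_one,
    pow_one]
  ring

lemma exists_eq_pow_mul_pow_of_gradient_eq_zero {a b c d : ℂ}
    (ha : a * d ^ 2 - 3 * b * c * d + 2 * c ^ 3 = 0)
    (hc : 2 * a * c ^ 2 - a * b * d - b ^ 2 * c = 0)
    (hd : a ^ 2 * d - 3 * a * b * c + 2 * b ^ 3 = 0) :
    ∃ x y : ℂ, a = x ^ 3 ∧ b = x ^ 2 * y ∧ c = x * y ^ 2 ∧ d = y ^ 3 := by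
  obtain ⟨x, rfl⟩ := IsAlgClosed.exists_pow_nat_eq a three_pos
  rcases eq_or_ne x 0 with rfl | hx
  · obtain rfl : b = 0 := by simpa using hd
    obtain rfl : c = 0 := by simpa using ha
    obtain ⟨y, rfl⟩ := IsAlgClosed.exists_pow_nat_eq d three_pos
    exact ⟨0, y, by simp⟩
  · obtain ⟨y, rfl⟩ : ∃ y, b = x ^ 2 * y := ⟨b / x ^ 2, by field_simp⟩
    obtain rfl : c = x * y ^ 2 := by
      have hsq : x ^ 6 * (c - x * y ^ 2) ^ 2 = 0 := by
        linear_combination (x ^ 3 * hc + x ^ 2 * y * hd) / 2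
      simpa [hx, sub_eq_zero] using hsq
    have hcube : x ^ 6 * (d - y ^ 3) = 0 := by linear_combination hd
    exact ⟨x, y, rfl, rfl, rfl, by simpa [hx, sub_eq_zero] using hcube⟩

lemma exists_eq_rationalNormalCurve_iff (v : E) :
    (∃ p, v = rationalNormalCurve b p) ↔ ∀ w, lineDeriv ℂ (cubicDiscr b) v w = 0 := by
  simp only [lineDeriv_cubicDiscr]
  constructor
  · rintro ⟨p, rfl⟩ w
    simp only [coe_repr_rationalNormalCurve, Matrix.cons_val]
    ring
  · intro h
    obtain ⟨x, y, h0, h1, h2, h3⟩ := exists_eq_pow_mul_pow_of_gradient_eq_zero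
      (by simpa using h (b 0)) (by simpa using h (b 2)) (by simpa using h (b 3))
    refine ⟨![x, y], b.ext_elem fun k ↦ ?_⟩
    rw [coe_repr_rationalNormalCurve]
    fin_cases k <;> simp [h0, h1, h2, h3]

lemma exists_hessian_roots {a b c d : ℂ} (hH : a * c - b ^ 2 ≠ 0)
    (hD : (a * d - b * c) ^ 2 ≠ 4 * (a * c - b ^ 2) * (b * d - c ^ 2)) :
    ∃ l m : ℂ, l ≠ m ∧ c = (l + m) * b - l * m * a ∧ d = (l + m) * c - l * m * b := by
  obtain ⟨e, he⟩ := IsAlgClosed.exists_pow_nat_eq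
    ((a * d - b * c) ^ 2 - 4 * (a * c - b ^ 2) * (b * d - c ^ 2)) two_pos
  have he0 : e ≠ 0 := by
    rintro rfl
    exact hD (by linear_combination -he)
  let l := (a * d - b * c + e) / (2 * (a * c - b ^ 2))
  let m := (a * d - b * c - e) / (2 * (a * c - b ^ 2))
  have hsub : l - m = e / (a * c - b ^ 2) := by
    simp only [l, m]
    field
  have hsum : l + m = (a * d - b * c) / (a * c - b ^ 2) := by
    simp only [l, m]
    field
  have hprod : l * m = (b * d - c ^ 2) / (a * c - b ^ 2) := by
    simp only [l, m]
    field_simp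
    linear_combination -he
  refine ⟨l, m, sub_ne_zero.1 (hsub ▸ div_ne_zero he0 hH), ?_, ?_⟩
  all_goals
    rw [hsum, hprod, div_mul_eq_mul_div, div_mul_eq_mul_div, ← sub_div, eq_div_iff hH]
    ring

lemma exists_eq_rationalNormalCurve_add {v : E}
    (hH : b.repr v 0 * b.repr v 2 - b.repr v 1 ^ 2 ≠ 0) (hD : cubicDiscr b v ≠ 0) :
    ∃ M : Matrix (Fin 2) (Fin 2) ℂ,
      v = rationalNormalCurve b (M.col 0) + rationalNormalCurve b (M.col 1) := by
  obtain ⟨l, m, hlm, hc, hd⟩ := exists_hessian_roots hH (d := b.repr v 3) fun h ↦ hD (by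
    simp only [cubicDiscr, Cubic.discr]
    linear_combination -27 * h)
  have hlm' : l - m ≠ 0 := sub_ne_zero.2 hlm
  obtain ⟨x, hx⟩ := IsAlgClosed.exists_pow_nat_eq ((b.repr v 1 - m * b.repr v 0) / (l - m))
    three_pos
  obtain ⟨y, hy⟩ := IsAlgClosed.exists_pow_nat_eq ((l * b.repr v 0 - b.repr v 1) / (l - m))
    three_pos
  rw [eq_div_iff hlm'] at hx hy
  have h0 : b.repr v 0 = x ^ 3 + y ^ 3 := mul_right_cancel₀ hlm' <| by
    linear_combination -hx - hy
  have h1 : b.repr v 1 = x ^ 3 * l + y ^ 3 * m := mul_right_cancel₀ hlm' <| by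
    linear_combination -l * hx - m * hy
  have h2 : b.repr v 2 = x ^ 3 * l ^ 2 + y ^ 3 * m ^ 2 := by
    rw [hc, h0, h1]
    ring
  have h3 : b.repr v 3 = x ^ 3 * l ^ 3 + y ^ 3 * m ^ 3 := by
    rw [hd, h1, h2]
    ring
  refine ⟨!![x, y; x * l, y * m], b.ext_elem fun k ↦ ?_⟩
  rw [map_add, Finsupp.add_apply, coe_repr_rationalNormalCurve, coe_repr_rationalNormalCurve]
  fin_cases k <;> simp [h0, h1, h2, h3] <;> ring

lemma eq_of_eqOn_rationalNormalCurve_add {f f' : E → ℂ} (hf : IsPolyFun f) (hf' : IsPolyFun f')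
    (h : ∀ M : Matrix (Fin 2) (Fin 2) ℂ, M.det ≠ 0 →
      f (rationalNormalCurve b (M.col 0) + rationalNormalCurve b (M.col 1)) =
        f' (rationalNormalCurve b (M.col 0) + rationalNormalCurve b (M.col 1))) :
    f = f' := by
  have := b.finiteDimensional_of_finite
  let hess (v : E) : ℂ := b.repr v 0 * b.repr v 2 - b.repr v 1 ^ 2
  have hhess : IsPolyFun hess := (isPolyFun_iff_exists_mvPolynomial b).2
    ⟨.X 0 * .X 2 - .X 1 ^ 2, fun v ↦ by simp [hess]⟩
  refine eq_of_eqOn_ne_zero hf hf' (mul_mem hhess (isPolyFun_cubicDiscr b)) (fun h0 ↦ ?_) ?_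
  · have := congrFun h0 (b 0 + b 2)
    simp [hess, cubicDiscr, Cubic.discr] at this
  · intro v hv
    obtain ⟨M, rfl⟩ := exists_eq_rationalNormalCurve_add b (left_ne_zero_of_mul hv)
      (right_ne_zero_of_mul hv)
    refine h M fun hM ↦ right_ne_zero_of_mul hv ?_
    rw [cubicDiscr_add_rationalNormalCurve, hM]
    simp

/-- The points of the rational normal curve are the vectors at which the discriminant is singular,
so an automorphism preserving the discriminant permutes them. -/
lemma exists_apply_rationalNormalCurve_eq {φ : E ≃ₗ[ℂ] E}
    (hφ : ∀ v, cubicDiscr b (φ v) = cubicDiscr b v) (p : Fin 2 → ℂ) :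
    ∃ p', φ (rationalNormalCurve b p) = rationalNormalCurve b p' := by
  rw [exists_eq_rationalNormalCurve_iff]
  intro w
  obtain ⟨w, rfl⟩ := φ.surjective w
  simp only [lineDeriv, ← map_smul, ← map_add, hφ]
  exact (exists_eq_rationalNormalCurve_iff b _).1 ⟨p, rfl⟩ w

/-- The equation says that `xX³ + yY³ + φ(3X²Y)`, with `φ(3X²Y) = aX³ + 3bX²Y + 3cXY² + dY³`, has
the same discriminant as `xX³ + 3X²Y + yY³`, up to the factor `-27`. -/
lemma coeff_eq_of_forall_discr_eq {a b c d : ℂ}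
    (h : ∀ x y, (x + a) ^ 2 * (y + d) ^ 2 - 6 * (x + a) * b * c * (y + d) + 4 * (x + a) * c ^ 3
      + 4 * b ^ 3 * (y + d) - 3 * b ^ 2 * c ^ 2 = x ^ 2 * y ^ 2 + 4 * y) :
    a = 0 ∧ b ^ 3 = 1 ∧ c = 0 ∧ d = 0 := by
  have h0 := h (-a) (-d)
  have h1 := h (-a) (1 - d)
  have h2 := h (-a) (-1 - d)
  have h3 := h (1 - a) (-d)
  have h4 := h (-1 - a) (-d)
  obtain rfl : a = 0 := by
    have : a ^ 2 = 0 := by linear_combination h0 - (h1 + h2) / 2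
    simpa using this
  have hb : b ^ 3 = 1 := by linear_combination (h1 - h2) / 8
  obtain rfl : d = 0 := by
    have : d ^ 2 = 0 := by linear_combination h0 - (h3 + h4) / 2
    simpa using this
  have hb0 : b ≠ 0 := by
    rintro rfl
    simp at hb
  exact ⟨rfl, hb, by simpa [hb0] using h0, rfl⟩

section Fixing

variable {φ : E →ₗ[ℂ] E} (hφ : ∀ v, cubicDiscr b (φ v) = cubicDiscr b v) (h0 : φ (b 0) = b 0)
  (h3 : φ (b 3) = b 3)
include hφ h0 h3

lemma exists_apply_basis_one_eq_smul : ∃ c : ℂ, c ^ 3 = 1 ∧ φ (b 1) = c • b 1 := by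
  obtain ⟨hu0, hu1, hu2, hu3⟩ := coeff_eq_of_forall_discr_eq (a := b.repr (φ (b 1)) 0)
    (b := b.repr (φ (b 1)) 1) (c := b.repr (φ (b 1)) 2) (d := b.repr (φ (b 1)) 3) fun x y ↦ by
      have := hφ (x • b 0 + b 1 + y • b 3)
      simp only [cubicDiscr, Cubic.discr, map_add, map_smul, h0, h3, Basis.repr_self,
        Finsupp.smul_single, smul_eq_mul, mul_one, Finsupp.coe_add, Pi.add_apply, ne_eq,
        one_ne_zero, not_false_eq_true, Finsupp.single_eq_of_ne, zero_add, Fin.reduceEq, add_zero,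
        Finsupp.single_eq_same, mul_zero, OfNat.ofNat_ne_zero, zero_pow, zero_ne_one, sub_self,
        zero_sub, zero_mul] at this
      linear_combination -this / 27
  refine ⟨_, hu1, b.ext_elem fun k ↦ ?_⟩
  fin_cases k <;> simp [hu0, hu2, hu3]

lemma exists_apply_basis_two_eq_smul : ∃ c : ℂ, c ^ 3 = 1 ∧ φ (b 2) = c • b 2 := by
  obtain ⟨hu3, hu2, hu1, hu0⟩ := coeff_eq_of_forall_discr_eq (a := b.repr (φ (b 2)) 3)
    (b := b.repr (φ (b 2)) 2) (c := b.repr (φ (b 2)) 1) (d := b.repr (φ (b 2)) 0) fun x y ↦ by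
      have := hφ (y • b 0 + b 2 + x • b 3)
      simp only [cubicDiscr, Cubic.discr, map_add, map_smul, h0, h3, Basis.repr_self,
        Finsupp.smul_single, smul_eq_mul, mul_one, Finsupp.coe_add, Pi.add_apply, ne_eq,
        one_ne_zero, not_false_eq_true, Finsupp.single_eq_of_ne, zero_add, Fin.reduceEq, add_zero,
        Finsupp.single_eq_same, mul_zero, OfNat.ofNat_ne_zero, zero_pow, zero_mul, zero_sub,
        sub_zero] at this
      linear_combination -this / 27
  refine ⟨_, hu2, b.ext_elem fun k ↦ ?_⟩
  fin_cases k <;> simp [hu0, hu1, hu3]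

lemma exists_apply_basis_eq_smul :
    ∃ c : ℂ, c ^ 3 = 1 ∧ φ (b 1) = c • b 1 ∧ φ (b 2) = c ^ 2 • b 2 := by
  obtain ⟨c, hc, h1⟩ := exists_apply_basis_one_eq_smul b hφ h0 h3
  obtain ⟨c', hc', h2⟩ := exists_apply_basis_two_eq_smul b hφ h0 h3
  have hsq : c ^ 2 * c' ^ 2 = 1 := by
    have := hφ (b 1 + b 2)
    simp only [cubicDiscr, Cubic.discr, map_add, h1, h2, map_smul, Basis.repr_self,
      Finsupp.smul_single, smul_eq_mul, mul_one, Finsupp.coe_add, Pi.add_apply,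
      Finsupp.single_eq_same, ne_eq, Fin.reduceEq, not_false_eq_true, Finsupp.single_eq_of_ne,
      add_zero, zero_add, zero_ne_one, mul_zero, zero_mul, sub_zero, OfNat.ofNat_ne_zero, zero_pow]
      at this
    linear_combination this / 81
  refine ⟨c, hc, h1, ?_⟩
  rw [h2]
  congr 1
  linear_combination c ^ 2 * hc' - c' * hsq

lemma exists_apply_rationalNormalCurve_eq_of_fixed : ∃ t : ℂˣ, ∀ p,
    φ (rationalNormalCurve b p) = rationalNormalCurve b ((torus t).1 *ᵥ p) := by
  obtain ⟨c, hc, h1, h2⟩ := exists_apply_basis_eq_smul b hφ h0 h3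
  have hc0 : c ≠ 0 := by
    rintro rfl
    simp at hc
  have hinv : c⁻¹ = c ^ 2 := inv_eq_of_mul_eq_one_left (by linear_combination hc)
  refine ⟨Units.mk0 c hc0, fun p ↦ b.ext_elem fun k ↦ ?_⟩
  have htorus : (torus (Units.mk0 c hc0)).1 *ᵥ p = ![c * p 0, c ^ 2 * p 1] := by
    ext i
    fin_cases i <;> simp [Matrix.mulVec, dotProduct, hinv]
  rw [htorus, coe_repr_rationalNormalCurve]
  fin_cases k <;> simp [rationalNormalCurve, Fin.sum_univ_four, h0, h1, h2, h3] <;> grind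

end Fixing

end Discriminant

section PrimeGroup

lemma le_primeGroup {V : Type*} [AddCommGroup V] [Module ℂ V] (G : Subgroup (V ≃ₗ[ℂ] V)) :
    G ≤ primeGroup G :=
  fun g hg _ _ hinv v ↦ hinv g hg v

lemma exists_eq_smul_specialLinearGroup {M : Matrix (Fin 2) (Fin 2) ℂ} {μ : ℂ} (hμ : μ ≠ 0)
    (hM : μ ^ 2 = M.det) : ∃ g : SL(2, ℂ), M = μ • g.1 :=
  ⟨⟨μ⁻¹ • M, by simp [← hM, hμ]⟩, (smul_inv_smul₀ hμ M).symm⟩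

lemma exists_eq_smul_of_det_pow_six_eq_one {M : Matrix (Fin 2) (Fin 2) ℂ} (hM : M.det ^ 6 = 1) :
    ∃ (μ : ℂ) (g : SL(2, ℂ)), (μ ^ 3 = 1 ∨ μ ^ 3 = Complex.I) ∧ M = μ • g.1 := by
  have hdet : M.det ≠ 0 := by
    intro h
    simp [h] at hM
  rcases sq_eq_one_iff.1 (show (M.det ^ 3) ^ 2 = 1 by rw [← pow_mul, hM]) with h | h
  · obtain ⟨g, hg⟩ := exists_eq_smul_specialLinearGroup (M := M) (pow_ne_zero 2 hdet)
      (by linear_combination M.det * h)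
    exact ⟨_, g, .inl (by linear_combination hM), hg⟩
  · obtain ⟨g, hg⟩ := exists_eq_smul_specialLinearGroup (M := M) (μ := -Complex.I * M.det ^ 2)
      (by simp [hdet]) (by linear_combination M.det ^ 4 * Complex.I_sq - M.det * h)
    exact ⟨_, g, .inr (by
      linear_combination Complex.I * hM - Complex.I * M.det ^ 6 * Complex.I_sq), hg⟩

variable {W : Type} [AddCommGroup W] [Module ℂ W] {ρ : SL(2, ℂ) →* (W ≃ₗ[ℂ] W)}

section Orbit

variable {b : Basis (Fin 4) ℂ W} (hb : IsSymPower ρ b)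
include hb

lemma rationalNormalCurve_smul_col_zero (μ : ℂ) (g : SL(2, ℂ)) :
    rationalNormalCurve b ((μ • g.1).col 0) = μ ^ 3 • ρ g (b 0) := by
  rw [hb.apply_first, ← rationalNormalCurve_smul]
  rfl

lemma rationalNormalCurve_smul_col_one (μ : ℂ) (g : SL(2, ℂ)) :
    rationalNormalCurve b ((μ • g.1).col 1) = μ ^ 3 • ρ g (b 3) := by
  rw [show (3 : Fin 4) = Fin.last 3 from rfl, hb.apply_last, ← rationalNormalCurve_smul]
  rfl

lemma eq_of_eqOn_smul_orbit {f f' : W → ℂ} (hf : IsPolyFun f) (hf' : IsPolyFun f')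
    (h : ∀ (c : ℂ) (g : SL(2, ℂ)), f (c • ρ g (b 0 + b 3)) = f' (c • ρ g (b 0 + b 3))) :
    f = f' := by
  refine eq_of_eqOn_rationalNormalCurve_add b hf hf' fun M hM ↦ ?_
  obtain ⟨μ, hμ⟩ := IsAlgClosed.exists_pow_nat_eq M.det two_pos
  have hμ0 : μ ≠ 0 := by
    rintro rfl
    simp [← hμ] at hM
  obtain ⟨g, rfl⟩ := exists_eq_smul_specialLinearGroup hμ0 hμ
  rw [rationalNormalCurve_smul_col_zero hb, rationalNormalCurve_smul_col_one hb, ← smul_add,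
    ← map_add]
  exact h _ g

lemma cubicDiscr_smul_orbit (c : ℂ) (g : SL(2, ℂ)) :
    cubicDiscr b (c • ρ g (b 0 + b 3)) = -27 * c ^ 4 := by
  have hg := cubicDiscr_add_rationalNormalCurve b g.1
  rw [g.2, ← one_smul ℂ g.1, rationalNormalCurve_smul_col_zero hb,
    rationalNormalCurve_smul_col_one hb, ← smul_add, ← map_add] at hg
  rw [cubicDiscr_smul]
  simp only [one_pow, one_smul, mul_one] at hg
  rw [hg, mul_comm]

lemma cubicDiscr_apply (g : SL(2, ℂ)) (v : W) : cubicDiscr b (ρ g v) = cubicDiscr b v := by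
  refine congrFun (eq_of_eqOn_smul_orbit (f := cubicDiscr b ∘ (ρ g : W →ₗ[ℂ] W)) hb
    (isPolyFun_comp_linearMap (isPolyFun_cubicDiscr b) _) (isPolyFun_cubicDiscr b)
    fun c h ↦ ?_) v
  have hmul : ρ g (c • ρ h (b 0 + b 3)) = c • ρ (g * h) (b 0 + b 3) := by
    rw [map_mul, map_smul]
    rfl
  rw [Function.comp_apply, LinearEquiv.coe_coe, hmul, cubicDiscr_smul_orbit hb,
    cubicDiscr_smul_orbit hb]

lemma cubicDiscr_apply_of_mem_primeGroup {φ : W ≃ₗ[ℂ] W} (hφ : φ ∈ primeGroup ρ.range) (v : W) :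
    cubicDiscr b (φ v) = cubicDiscr b v := by
  refine hφ _ (isPolyFun_cubicDiscr b) ?_ v
  rintro _ ⟨g, rfl⟩ v
  exact cubicDiscr_apply hb g v

lemma exists_apply_eq_I_smul : ∃ j : SL(2, ℂ), ρ j (b 0 + b 3) = Complex.I • (b 0 + b 3) := by
  let j : SL(2, ℂ) := ⟨!![0, -Complex.I; -Complex.I, 0], by simp⟩
  have hI : (-Complex.I) ^ 3 = Complex.I := by
    linear_combination -Complex.I * Complex.I_sq
  have h0 : ρ j (b 0) = Complex.I • b 3 := by
    rw [hb.apply_first, rationalNormalCurve_of_fst_eq_zero _ rfl, ← hI]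
    rfl
  have h3 : ρ j (b 3) = Complex.I • b 0 := by
    rw [← hI]
    exact (hb.apply_last j).trans (rationalNormalCurve_of_snd_eq_zero _ rfl)
  exact ⟨j, by rw [map_add, h0, h3, smul_add, add_comm]⟩

lemma smul_I_mem_primeGroup :
    LinearEquiv.smulOfNeZero ℂ W Complex.I Complex.I_ne_zero ∈ primeGroup ρ.range := by
  intro f hf hinv v
  obtain ⟨j, hj⟩ := exists_apply_eq_I_smul hb
  refine congrFun (eq_of_eqOn_smul_orbit (f := f ∘ (Complex.I • LinearMap.id : W →ₗ[ℂ] W)) hb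
    (isPolyFun_comp_linearMap hf _) hf fun c g ↦ ?_) v
  calc f (Complex.I • c • ρ g (b 0 + b 3))
      = f (ρ (g * j) (c • (b 0 + b 3))) := by
        rw [map_mul, LinearEquiv.mul_apply, map_smul (ρ j), hj, smul_comm, map_smul, map_smul]
    _ = f (c • (b 0 + b 3)) := hinv _ ⟨_, rfl⟩ _
    _ = f (c • ρ g (b 0 + b 3)) := by rw [← map_smul, hinv _ ⟨g, rfl⟩]

lemma smul_I_notMem_range :
    LinearEquiv.smulOfNeZero ℂ W Complex.I Complex.I_ne_zero ∉ ρ.range := by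
  rintro ⟨g, hg⟩
  have h0 : rationalNormalCurve b (g.1.col 0) = Complex.I • b 0 := by
    rw [← hb.apply_first, hg]
    rfl
  have h3 : rationalNormalCurve b (g.1.col 1) = Complex.I • b 3 := by
    rw [← hb.apply_last, hg]
    rfl
  have h00 : g.1 0 0 ^ 3 = Complex.I := by
    simpa [coe_repr_rationalNormalCurve] using congrArg (b.repr · 0) h0
  have h10 : g.1 1 0 = 0 := by
    simpa [coe_repr_rationalNormalCurve] using congrArg (b.repr · 3) h0
  have h11 : g.1 1 1 ^ 3 = Complex.I := by
    simpa [coe_repr_rationalNormalCurve] using congrArg (b.repr · 3) h3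
  have hdet : g.1 0 0 * g.1 1 1 = 1 := by
    simpa only [Matrix.det_fin_two, h10, mul_zero, sub_zero] using g.det_coe
  have : (1 : ℂ) = -1 := by
    rw [← Complex.I_mul_I]
    nth_rw 1 [← h00]
    rw [← h11, ← mul_pow, hdet, one_pow]
  norm_num at this

lemma mem_range_of_apply_eq_self {φ : W ≃ₗ[ℂ] W} (hφ : φ ∈ primeGroup ρ.range)
    (h0 : φ (b 0) = b 0) (h3 : φ (b 3) = b 3) : φ ∈ ρ.range := by
  obtain ⟨t, ht⟩ := exists_apply_rationalNormalCurve_eq_of_fixed b (φ := φ.toLinearMap)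
    (cubicDiscr_apply_of_mem_primeGroup hb hφ) h0 h3
  refine ⟨torus t, LinearEquiv.toLinearMap_injective <| b.ext <|
    apply_eq_of_forall_apply_rationalNormalCurve_eq b fun p ↦ ?_⟩
  rw [ht]
  exact hb (torus t) p

lemma mem_range_of_apply_eq {φ : W ≃ₗ[ℂ] W} (hφ : φ ∈ primeGroup ρ.range) {g : SL(2, ℂ)}
    (h0 : φ (b 0) = ρ g (b 0)) (h3 : φ (b 3) = ρ g (b 3)) : φ ∈ ρ.range := by
  have hg : ρ g ∈ ρ.range := ⟨g, rfl⟩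
  refine (Subgroup.mul_mem_cancel_left _ (inv_mem hg)).1 <| mem_range_of_apply_eq_self hb
    (mul_mem (inv_mem (le_primeGroup _ hg)) hφ) ?_ ?_
  · exact (LinearEquiv.symm_apply_eq _).2 h0
  · exact (LinearEquiv.symm_apply_eq _).2 h3

lemma exists_apply_eq_smul {φ : W ≃ₗ[ℂ] W} (hφ : φ ∈ primeGroup ρ.range) :
    ∃ (ε : ℂ) (g : SL(2, ℂ)), (ε = 1 ∨ ε = Complex.I) ∧
      φ (b 0) = ε • ρ g (b 0) ∧ φ (b 3) = ε • ρ g (b 3) := by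
  have hdiscr := cubicDiscr_apply_of_mem_primeGroup hb hφ
  have hb0 : rationalNormalCurve b ![1, 0] = b 0 :=
    (rationalNormalCurve_of_snd_eq_zero b rfl).trans (by simp)
  have hb3 : rationalNormalCurve b ![0, 1] = b 3 :=
    (rationalNormalCurve_of_fst_eq_zero b rfl).trans (by simp [Fin.last])
  obtain ⟨p, hp⟩ := exists_apply_rationalNormalCurve_eq b hdiscr ![1, 0]
  obtain ⟨q, hq⟩ := exists_apply_rationalNormalCurve_eq b hdiscr ![0, 1]
  rw [hb0] at hp
  rw [hb3] at hq
  have hM : (Matrix.of ![p, q])ᵀ.det ^ 6 = 1 := by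
    have hdet : -27 * (Matrix.of ![p, q])ᵀ.det ^ 6 = -27 := by
      calc -27 * (Matrix.of ![p, q])ᵀ.det ^ 6
          = cubicDiscr b (φ (b 0 + b 3)) := by
            rw [map_add, hp, hq, ← cubicDiscr_add_rationalNormalCurve b]
            rfl
        _ = -27 := by simpa only [hdiscr, one_smul, map_one, LinearEquiv.coe_one, id_eq, one_pow,
          mul_one] using
          cubicDiscr_smul_orbit hb 1 1
    linear_combination -hdet / 27
  obtain ⟨μ, g, hμ, hg⟩ := exists_eq_smul_of_det_pow_six_eq_one hM
  have hpg : p = (μ • g.1).col 0 := congrArg (Matrix.col · 0) hg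
  have hqg : q = (μ • g.1).col 1 := congrArg (Matrix.col · 1) hg
  refine ⟨μ ^ 3, g, hμ, ?_, ?_⟩
  · rw [hp, hpg, rationalNormalCurve_smul_col_zero hb]
  · rw [hq, hqg, rationalNormalCurve_smul_col_one hb]

lemma mem_range_or_exists_eq_smul_I_mul {φ : W ≃ₗ[ℂ] W} (hφ : φ ∈ primeGroup ρ.range) :
    φ ∈ ρ.range ∨
      ∃ u ∈ ρ.range, φ = LinearEquiv.smulOfNeZero ℂ W Complex.I Complex.I_ne_zero * u := by
  obtain ⟨ε, g, rfl | rfl, h0, h3⟩ := exists_apply_eq_smul hb hφ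
  · simp only [one_smul] at h0 h3
    exact .inl (mem_range_of_apply_eq hb hφ h0 h3)
  · refine .inr ⟨_, mem_range_of_apply_eq hb (mul_mem (inv_mem (smul_I_mem_primeGroup hb)) hφ)
      (g := g) ?_ ?_, (mul_inv_cancel_left _ φ).symm⟩
    · exact (LinearEquiv.symm_apply_eq _).2 h0
    · exact (LinearEquiv.symm_apply_eq _).2 h3

end Orbit

theorem stmt17_general (hW : finrank ℂ W = 4) (hρpoly : IsPolynomialRep ρ)
    (hρirr : IsIrreducibleRep ρ) (δ : W ≃ₗ[ℂ] W)
    (hδ : δ = LinearEquiv.smulOfNeZero ℂ W Complex.I Complex.I_ne_zero) :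
    δ ∈ primeGroup ρ.range ∧ δ ∉ ρ.range ∧
    (∀ φ, φ ∈ primeGroup ρ.range ↔ (φ ∈ ρ.range ∨ ∃ u ∈ ρ.range, φ = δ * u)) := by
  have : FiniteDimensional ℂ W := .of_finrank_eq_succ hW
  have : Nontrivial W := nontrivial_of_finrank_eq_succ hW
  obtain ⟨n, b, hb⟩ := exists_basis_isSymPower hρpoly hρirr
  obtain rfl : n = 3 := by simpa [hW] using (finrank_eq_card_basis b).symm
  subst hδ
  have hI := smul_I_mem_primeGroup hb
  refine ⟨hI, smul_I_notMem_range hb, fun φ ↦ ⟨mem_range_or_exists_eq_smul_I_mul hb, ?_⟩⟩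
  rintro (hφ | ⟨u, hu, rfl⟩)
  · exact le_primeGroup _ hφ
  · exact mul_mem hI (le_primeGroup _ hu)

end PrimeGroup

/-- Let `G = SL₂(ℂ)` act on `V = R₃ = Sym³(ℂ²)`, its 4-dimensional
irreducible representation (realized as any polynomial irreducible representation on
`ℂ⁴`).  Then `G'/G` is generated by scalar multiplication by `i` on `R₃`: one has
`δ = i·id ∈ G'`, `δ ∉ G`, and `G' = G ∪ δ·G` (note that `δ² = -id ∈ G`, so the coset of
`δ` has order 2 and `G'` is the image of `{g ∈ GL₂(ℂ) : det g = ±1}` acting on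
`Sym³(ℂ²)`). -/
theorem stmt17
    (ρ : Matrix.SpecialLinearGroup (Fin 2) ℂ →* ((Fin 4 → ℂ) ≃ₗ[ℂ] (Fin 4 → ℂ)))
    (hρpoly : IsPolynomialRep ρ) (hρirr : IsIrreducibleRep ρ)
    (δ : (Fin 4 → ℂ) ≃ₗ[ℂ] (Fin 4 → ℂ))
    (hδ : δ = LinearEquiv.smulOfNeZero ℂ (Fin 4 → ℂ) Complex.I Complex.I_ne_zero) :
    δ ∈ primeGroup ρ.range ∧ δ ∉ ρ.range ∧
    (∀ φ, φ ∈ primeGroup ρ.range ↔ (φ ∈ ρ.range ∨ ∃ u ∈ ρ.range, φ = δ * u)) :=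
  stmt17_general (by simp) hρpoly hρirr δ hδ

end Stmt17
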